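/- Let (g,σ,B) be a symmetric triple with eigenspace decomposition g = h ⊕ m, h = ⁅m,m⁆. Let A : m → m be a linear automorphism such that B(Ax,Ay) = B(x,y) and A(⁅⁅x,y⁆,z⁆) = ⁅⁅Ax,Ay⁆,Az⁆ for all x,y,z ∈ m. Then there exists a unique Lie algebra automorphism Φ of g such that Φ restricted to m equals A and Φ ∘ σ = σ ∘ Φ. -/

import Mathlib

/-!
Since `⁅m, m⁆ = h`, the algebra is generated by `m`, so a homomorphism is determined by its
restriction to `m`; this gives uniqueness and also `Φ ∘ σ = σ ∘ Φ`, both sides being `-A` on `m`.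

For existence, the graph `P` of `A` is a Lie triple subsystem of `g × g`. Adding to it all elements
of `h × h` which normalize `P` produces a Lie subalgebra `K`. Its first projection is onto because
`m` generates. It is injective because `h` acts faithfully on `m`, which is where the form enters:
if `⁅h₀, m⁆ = 0`, then `B h₀ ⁅x, y⁆ = B ⁅h₀, x⁆ y = 0` for `x, y ∈ m`, so `h₀ ⟂ h`, while
`h ⟂ m` by invariance under `σ`. Hence `K` is the graph of a homomorphism extending `A`, and the
homomorphism obtained in the same way from `A⁻¹` inverts it.
-/

section Generalities

variable {R L L' : Type*} [CommRing R] [LieRing L] [LieAlgebra R L] [LieRing L'] [LieAlgebra R L']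

theorem lieHom_ext_of_lieSpan_eq_top {s : Set L} (hs : LieSubalgebra.lieSpan R L s = ⊤)
    {f g : L →ₗ⁅R⁆ L'} (hfg : Set.EqOn f g s) : f = g := by
  ext x
  have hx : x ∈ LieSubalgebra.lieSpan R L s := hs ▸ LieSubalgebra.mem_top x
  induction hx using LieSubalgebra.lieSpan_induction with
  | mem x hx => exact hfg hx
  | zero => simp only [map_zero]
  | add x y _ _ hx hy => simp only [map_add, hx, hy]
  | smul c x _ hx => simp only [map_smul, hx]
  | lie x y _ _ hx hy => simp only [LieHom.map_lie, hx, hy]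

theorem lieHom_surjective_of_lieSpan_eq_top {s : Set L'}
    (hs : LieSubalgebra.lieSpan R L' s = ⊤) {f : L →ₗ⁅R⁆ L'} (hsf : s ⊆ Set.range f) :
    Function.Surjective f := by
  have hle : LieSubalgebra.lieSpan R L' s ≤ f.range :=
    LieSubalgebra.lieSpan_le.mpr (f.coe_range.symm ▸ hsf)
  exact fun y => (f.mem_range y).mp (hle (hs ▸ LieSubalgebra.mem_top y))

theorem exists_lieHom_of_bijective_fst (K : LieSubalgebra R (L × L'))
    (hK : Function.Bijective ((LieHom.fst R L L').comp K.incl)) :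
    ∃ φ : L →ₗ⁅R⁆ L', ∀ p ∈ K, φ p.1 = p.2 := by
  let e : K ≃ₗ⁅R⁆ L := LieEquiv.ofBijective _ hK
  refine ⟨((LieHom.snd R L L').comp K.incl).comp e.symm.toLieHom, fun p hp => ?_⟩
  have he : e.symm p.1 = ⟨p, hp⟩ := e.symm_apply_eq.mpr rfl
  exact congrArg (fun k : K => (k : L × L').2) he

/-- The elements of a Lie subalgebra `T` whose adjoint action stabilizes a linear subspace `P`. -/
def stabilizerIn (T : LieSubalgebra R L) (P : Submodule R L) : LieSubalgebra R L where
  carrier := {t | t ∈ T ∧ ∀ p ∈ P, ⁅t, p⁆ ∈ P}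
  zero_mem' := ⟨T.zero_mem, fun p _ => by rw [zero_lie]; exact P.zero_mem⟩
  add_mem' hs ht := ⟨T.add_mem hs.1 ht.1, fun p hp => by
    rw [add_lie]; exact P.add_mem (hs.2 p hp) (ht.2 p hp)⟩
  smul_mem' c _ ht := ⟨T.smul_mem c ht.1, fun p hp => by
    rw [smul_lie]; exact P.smul_mem c (ht.2 p hp)⟩
  lie_mem' hs ht := ⟨T.lie_mem hs.1 ht.1, fun p hp => by
    rw [lie_lie]
    exact P.sub_mem (hs.2 _ (ht.2 p hp)) (ht.2 _ (hs.2 p hp))⟩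

/-- The Lie subalgebra `N + P`, where `P` is a Lie triple subsystem with `⁅P, P⁆ ⊆ T` and `N` is
the stabilizer of `P` in `T`. -/
def stabilizerSupTriple (T : LieSubalgebra R L) (P : Submodule R L)
    (hPT : ∀ p ∈ P, ∀ q ∈ P, ⁅p, q⁆ ∈ T) (hP : ∀ p ∈ P, ∀ q ∈ P, ∀ r ∈ P, ⁅⁅p, q⁆, r⁆ ∈ P) :
    LieSubalgebra R L where
  toSubmodule := (stabilizerIn T P).toSubmodule ⊔ P
  lie_mem' := by
    intro x y hx hy
    obtain ⟨s, hs, p, hp, rfl⟩ := Submodule.mem_sup.mp hx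
    obtain ⟨t, ht, q, hq, rfl⟩ := Submodule.mem_sup.mp hy
    have hst : ⁅s, t⁆ + ⁅p, q⁆ ∈ (stabilizerIn T P).toSubmodule :=
      Submodule.add_mem _ ((stabilizerIn T P).lie_mem hs ht) ⟨hPT p hp q hq, hP p hp q hq⟩
    have hsq : ⁅s, q⁆ - ⁅t, p⁆ ∈ P := P.sub_mem (hs.2 q hq) (ht.2 p hp)
    have hsplit : ⁅s + p, t + q⁆ = (⁅s, t⁆ + ⁅p, q⁆) + (⁅s, q⁆ - ⁅t, p⁆) := by
      rw [add_lie, lie_add, lie_add, ← lie_skew p t]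
      abel
    exact hsplit ▸ Submodule.add_mem_sup hst hsq

/-- The graph of a linear map `A : M → M'` between subspaces, as a subspace of the ambient
product `L × L'`. -/
def ambientGraph {M : Submodule R L} {M' : Submodule R L'} (A : M →ₗ[R] M') :
    Submodule R (L × L') :=
  LinearMap.range (M.subtype.prod (M'.subtype ∘ₗ A))

end Generalities

/-- The decomposition `L = H ⊕ M` of a Lie algebra into the `(+1)`- and `(-1)`-eigenspaces of an
endomorphism `σ`, which is then an involution. -/
structure IsSymmetricDecomposition {R L : Type*} [CommRing R] [LieRing L] [LieAlgebra R L]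
    (σ : L →ₗ⁅R⁆ L) (H M : Submodule R L) : Prop where
  mem_fixed_iff : ∀ x, x ∈ H ↔ σ x = x
  mem_anti_iff : ∀ x, x ∈ M ↔ σ x = -x
  isCompl : IsCompl H M

/-- Faithfulness of the adjoint action of `H` on `M`. -/
def IsEffective {R L : Type*} [CommRing R] [LieRing L] [LieAlgebra R L]
    (H M : Submodule R L) : Prop :=
  ∀ h ∈ H, (∀ m ∈ M, ⁅h, m⁆ = 0) → h = 0

namespace IsSymmetricDecomposition

variable {R L L' : Type*} [CommRing R] [LieRing L] [LieAlgebra R L] [LieRing L'] [LieAlgebra R L']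
  {σ : L →ₗ⁅R⁆ L} {H M : Submodule R L} {σ' : L' →ₗ⁅R⁆ L'} {H' M' : Submodule R L'}

theorem lie_fixed_fixed (S : IsSymmetricDecomposition σ H M) {x y : L} (hx : x ∈ H) (hy : y ∈ H) :
    ⁅x, y⁆ ∈ H := by
  rw [S.mem_fixed_iff] at *
  rw [LieHom.map_lie, hx, hy]

theorem lie_fixed_anti (S : IsSymmetricDecomposition σ H M) {x y : L} (hx : x ∈ H) (hy : y ∈ M) :
    ⁅x, y⁆ ∈ M := by
  rw [S.mem_fixed_iff] at hx
  rw [S.mem_anti_iff] at *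
  rw [LieHom.map_lie, hx, hy, lie_neg]

theorem lie_anti_anti (S : IsSymmetricDecomposition σ H M) {x y : L} (hx : x ∈ M) (hy : y ∈ M) :
    ⁅x, y⁆ ∈ H := by
  rw [S.mem_anti_iff] at hx hy
  rw [S.mem_fixed_iff, LieHom.map_lie, hx, hy, neg_lie, lie_neg, neg_neg]

theorem lieSpan_anti_eq_top (S : IsSymmetricDecomposition σ H M)
    (hHM : H ≤ Submodule.span R {z : L | ∃ x ∈ M, ∃ y ∈ M, ⁅x, y⁆ = z}) :
    LieSubalgebra.lieSpan R L (M : Set L) = ⊤ := by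
  set K := LieSubalgebra.lieSpan R L (M : Set L)
  have hM : M ≤ K.toSubmodule := LieSubalgebra.subset_lieSpan
  have hH : H ≤ K.toSubmodule := by
    refine hHM.trans (Submodule.span_le.mpr ?_)
    rintro _ ⟨x, hx, y, hy, rfl⟩
    exact K.lie_mem (hM hx) (hM hy)
  rw [← LieSubalgebra.toSubmodule_inj, LieSubalgebra.top_toSubmodule, eq_top_iff,
    ← S.isCompl.sup_eq_top]
  exact sup_le hH hM

section InvariantForm

variable {B : LinearMap.BilinForm R L}

theorem form_fixed_anti_eq_zero [NoZeroDivisors R] [NeZero (2 : R)]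
    (S : IsSymmetricDecomposition σ H M) (hBσ : ∀ x y, B (σ x) (σ y) = B x y)
    {h m : L} (hh : h ∈ H) (hm : m ∈ M) : B h m = 0 := by
  have hneg : -B h m = B h m := by
    simpa only [(S.mem_fixed_iff h).mp hh, (S.mem_anti_iff m).mp hm, map_neg] using hBσ h m
  have htwo : 2 * B h m = 0 := by linear_combination -hneg
  exact (mul_eq_zero.mp htwo).resolve_left two_ne_zero

theorem isEffective_of_separatingLeft [NoZeroDivisors R] [NeZero (2 : R)]
    (S : IsSymmetricDecomposition σ H M)
    (hHM : H ≤ Submodule.span R {z : L | ∃ x ∈ M, ∃ y ∈ M, ⁅x, y⁆ = z})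
    (hB : B.SeparatingLeft) (hBσ : ∀ x y, B (σ x) (σ y) = B x y)
    (hBad : ∀ x y z, B ⁅x, y⁆ z = B x ⁅y, z⁆) : IsEffective H M := by
  intro h hh hzero
  have hH : H ≤ LinearMap.ker (B h) := by
    refine hHM.trans (Submodule.span_le.mpr ?_)
    rintro _ ⟨x, hx, y, -, rfl⟩
    change B h ⁅x, y⁆ = 0
    rw [← hBad, hzero x hx, map_zero, LinearMap.zero_apply]
  have hM : M ≤ LinearMap.ker (B h) := fun m hm => S.form_fixed_anti_eq_zero hBσ hh hm
  have htop : ⊤ ≤ LinearMap.ker (B h) := S.isCompl.sup_eq_top ▸ sup_le hH hM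
  exact hB h fun y => htop Submodule.mem_top

end InvariantForm

/-- The fixed subspace `H` as a Lie subalgebra. -/
def fixedSubalgebra (S : IsSymmetricDecomposition σ H M) : LieSubalgebra R L where
  toSubmodule := H
  lie_mem' := S.lie_fixed_fixed

/-- The Lie triple product `⁅⁅x, y⁆, z⁆` on the `(-1)`-eigenspace. -/
def triple (S : IsSymmetricDecomposition σ H M) (x y z : M) : M :=
  ⟨⁅⁅(x : L), (y : L)⁆, (z : L)⁆, S.lie_fixed_anti (S.lie_anti_anti x.2 y.2) z.2⟩

/-- The Lie subalgebra of `L × L'` which will turn out to be the graph of the extension of the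
triple homomorphism `A`: the graph of `A` together with its stabilizer in `H × H'`. -/
def extensionGraph (S : IsSymmetricDecomposition σ H M) (S' : IsSymmetricDecomposition σ' H' M')
    (A : M →ₗ[R] M') (hA : ∀ x y z, A (S.triple x y z) = S'.triple (A x) (A y) (A z)) :
    LieSubalgebra R (L × L') :=
  stabilizerSupTriple
    (S.fixedSubalgebra.comap (LieHom.fst R L L') ⊓ S'.fixedSubalgebra.comap (LieHom.snd R L L'))
    (ambientGraph A)
    (by
      rintro _ ⟨x, rfl⟩ _ ⟨y, rfl⟩
      exact ⟨S.lie_anti_anti x.2 y.2, S'.lie_anti_anti (A x).2 (A y).2⟩)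
    (by
      rintro _ ⟨x, rfl⟩ _ ⟨y, rfl⟩ _ ⟨z, rfl⟩
      exact ⟨S.triple x y z, Prod.ext rfl (congrArg Subtype.val (hA x y z))⟩)

section Extension

variable (S : IsSymmetricDecomposition σ H M) (S' : IsSymmetricDecomposition σ' H' M')
  {A : M →ₗ[R] M'} (hA : ∀ x y z, A (S.triple x y z) = S'.triple (A x) (A y) (A z))

theorem mk_mem_extensionGraph (x : M) : ((x : L), (A x : L')) ∈ S.extensionGraph S' A hA :=
  Submodule.mem_sup_right ⟨x, rfl⟩

theorem eq_zero_of_mem_extensionGraph (heff : IsEffective H' M')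
    (hsurj : Function.Surjective A) {p : L × L'} (hp : p ∈ S.extensionGraph S' A hA)
    (hp₁ : p.1 = 0) : p = 0 := by
  obtain ⟨n, ⟨⟨hnH, hnH'⟩, hn⟩, _, ⟨x, rfl⟩, rfl⟩ := Submodule.mem_sup.mp hp
  have hnx : n.1 = -(x : L) := eq_neg_of_add_eq_zero_left hp₁
  have hn₁ : n.1 = 0 :=
    Submodule.disjoint_def.mp S.isCompl.disjoint n.1 hnH (hnx ▸ M.neg_mem x.2)
  have hx : x = 0 := Subtype.ext (neg_eq_zero.mp (hnx.symm.trans hn₁))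
  have hn₂ : n.2 = 0 := by
    refine heff n.2 hnH' fun m' hm' => ?_
    obtain ⟨y, hy⟩ := hsurj ⟨m', hm'⟩
    obtain ⟨z, hz⟩ := hn _ ⟨y, rfl⟩
    have hz₁ : (z : L) = ⁅n.1, (y : L)⁆ := congrArg Prod.fst hz
    have hz₂ : (A z : L') = ⁅n.2, (A y : L')⁆ := congrArg Prod.snd hz
    have hz₀ : z = 0 := Subtype.ext (by rw [hz₁, hn₁, zero_lie, Submodule.coe_zero])
    simpa only [hz₀, hy, map_zero, Submodule.coe_zero] using hz₂.symm
  rw [hx, map_zero, add_zero]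
  exact Prod.ext hn₁ hn₂

end Extension

theorem exists_lieHom_extending (S : IsSymmetricDecomposition σ H M)
    (S' : IsSymmetricDecomposition σ' H' M')
    (hgen : LieSubalgebra.lieSpan R L (M : Set L) = ⊤) (heff : IsEffective H' M')
    {A : M →ₗ[R] M'} (hsurj : Function.Surjective A)
    (hA : ∀ x y z, A (S.triple x y z) = S'.triple (A x) (A y) (A z)) :
    ∃ φ : L →ₗ⁅R⁆ L', ∀ x : M, φ x = A x := by
  let K := S.extensionGraph S' A hA
  have hinj : Function.Injective ((LieHom.fst R L L').comp K.incl) :=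
    (injective_iff_map_eq_zero _).mpr fun p hp =>
      Subtype.ext (S.eq_zero_of_mem_extensionGraph S' hA heff hsurj p.2 hp)
  have hfst : Function.Surjective ((LieHom.fst R L L').comp K.incl) :=
    lieHom_surjective_of_lieSpan_eq_top hgen fun x hx =>
      ⟨⟨_, S.mk_mem_extensionGraph S' hA ⟨x, hx⟩⟩, rfl⟩
  obtain ⟨φ, hφ⟩ := exists_lieHom_of_bijective_fst K ⟨hinj, hfst⟩
  exact ⟨φ, fun x => hφ _ (S.mk_mem_extensionGraph S' hA x)⟩

theorem symm_map_triple (S : IsSymmetricDecomposition σ H M)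
    (S' : IsSymmetricDecomposition σ' H' M') {A : M ≃ₗ[R] M'}
    (hA : ∀ x y z, A (S.triple x y z) = S'.triple (A x) (A y) (A z)) (x y z : M') :
    A.symm (S'.triple x y z) = S.triple (A.symm x) (A.symm y) (A.symm z) := by
  rw [A.symm_apply_eq, hA, A.apply_symm_apply, A.apply_symm_apply, A.apply_symm_apply]

theorem exists_lieEquiv_extending (S : IsSymmetricDecomposition σ H M)
    (S' : IsSymmetricDecomposition σ' H' M')
    (hgen : LieSubalgebra.lieSpan R L (M : Set L) = ⊤)
    (hgen' : LieSubalgebra.lieSpan R L' (M' : Set L') = ⊤)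
    (heff : IsEffective H M) (heff' : IsEffective H' M') (A : M ≃ₗ[R] M')
    (hA : ∀ x y z, A (S.triple x y z) = S'.triple (A x) (A y) (A z)) :
    ∃ Φ : L ≃ₗ⁅R⁆ L', ∀ x : M, Φ x = A x := by
  obtain ⟨φ, hφ⟩ :=
    S.exists_lieHom_extending S' hgen heff' (A := A.toLinearMap) A.surjective hA
  obtain ⟨ψ, hψ⟩ := S'.exists_lieHom_extending S hgen' heff (A := A.symm.toLinearMap)
    A.symm.surjective (S.symm_map_triple S' hA)
  have hψφ : ψ.comp φ = LieHom.id := lieHom_ext_of_lieSpan_eq_top hgen fun x hx => by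
    simpa [hφ ⟨x, hx⟩] using hψ (A ⟨x, hx⟩)
  have hφψ : φ.comp ψ = LieHom.id := lieHom_ext_of_lieSpan_eq_top hgen' fun x hx => by
    simpa [hψ ⟨x, hx⟩] using hφ (A.symm ⟨x, hx⟩)
  let Φ : L ≃ₗ⁅R⁆ L' :=
    { φ with
      invFun := ψ
      left_inv := LieHom.congr_fun hψφ
      right_inv := LieHom.congr_fun hφψ }
  exact ⟨Φ, hφ⟩

theorem map_involution (S : IsSymmetricDecomposition σ H M)
    (S' : IsSymmetricDecomposition σ' H' M')
    (hgen : LieSubalgebra.lieSpan R L (M : Set L) = ⊤) {f : L →ₗ⁅R⁆ L'}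
    (hf : ∀ x ∈ M, f x ∈ M') (x : L) : f (σ x) = σ' (f x) := by
  have hcomp : f.comp σ = σ'.comp f := lieHom_ext_of_lieSpan_eq_top hgen fun m hm => by
    rw [LieHom.comp_apply, LieHom.comp_apply, (S.mem_anti_iff m).mp hm, map_neg,
      (S'.mem_anti_iff _).mp (hf m hm)]
  exact LieHom.congr_fun hcomp x

end IsSymmetricDecomposition

theorem lts_automorphism_extends_general {R L L' : Type*} [CommRing R]
    [LieRing L] [LieAlgebra R L] [LieRing L'] [LieAlgebra R L']
    {σ : L →ₗ⁅R⁆ L} {H M : Submodule R L} {σ' : L' →ₗ⁅R⁆ L'} {H' M' : Submodule R L'}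
    (S : IsSymmetricDecomposition σ H M) (S' : IsSymmetricDecomposition σ' H' M')
    (hgen : LieSubalgebra.lieSpan R L (M : Set L) = ⊤)
    (hgen' : LieSubalgebra.lieSpan R L' (M' : Set L') = ⊤)
    (heff : IsEffective H M) (heff' : IsEffective H' M') (A : M ≃ₗ[R] M')
    (hA : ∀ x y z, A (S.triple x y z) = S'.triple (A x) (A y) (A z)) :
    ∃! Φ : L ≃ₗ⁅R⁆ L', (∀ x : M, Φ x = A x) ∧ ∀ x, Φ (σ x) = σ' (Φ x) := by
  obtain ⟨Φ, hΦ⟩ := S.exists_lieEquiv_extending S' hgen hgen' heff heff' A hA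
  have hmem : ∀ x ∈ M, Φ x ∈ M' := fun x hx => hΦ ⟨x, hx⟩ ▸ (A ⟨x, hx⟩).2
  refine ⟨Φ, ⟨hΦ, S.map_involution S' hgen (f := Φ.toLieHom) hmem⟩, fun Ψ ⟨hΨ, _⟩ => ?_⟩
  have hhom : Ψ.toLieHom = Φ.toLieHom := lieHom_ext_of_lieSpan_eq_top hgen fun x hx =>
    (hΨ ⟨x, hx⟩).trans (hΦ ⟨x, hx⟩).symm
  exact LieEquiv.ext (LieHom.congr_fun hhom)

/-- For a symmetric triple `(g, σ, B)` with `g = h ⊕ m`, `h = ⁅m,m⁆`, every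
linear automorphism `A` of `m` preserving `B` and the triple product `⁅⁅·,·⁆,·⁆` extends
uniquely to a Lie algebra automorphism `Φ` of `g` with `Φ|_m = A` and `Φ ∘ σ = σ ∘ Φ`. -/
theorem lts_automorphism_extends
    (L : Type*) [LieRing L] [LieAlgebra ℝ L] [FiniteDimensional ℝ L]
    (σ : L →ₗ⁅ℝ⁆ L) (hσ : ∀ x, σ (σ x) = x)
    (H M : Submodule ℝ L)
    (hH : ∀ x, x ∈ H ↔ σ x = x)
    (hM : ∀ x, x ∈ M ↔ σ x = -x)
    (hcompl : IsCompl H M)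
    (hHspan : H = Submodule.span ℝ {z : L | ∃ x ∈ M, ∃ y ∈ M, ⁅x, y⁆ = z})
    (hMM : ∀ x ∈ M, ∀ y ∈ M, ⁅x, y⁆ ∈ H)
    (hHM : ∀ h ∈ H, ∀ m ∈ M, ⁅h, m⁆ ∈ M)
    (B : LinearMap.BilinForm ℝ L)
    (hBnd : B.Nondegenerate)
    (hBsymm : ∀ x y : L, B x y = B y x)
    (hBσ : ∀ x y : L, B (σ x) (σ y) = B x y)
    (hBad : ∀ x y z : L, B ⁅x, y⁆ z = B x ⁅y, z⁆)
    (A : ↥M ≃ₗ[ℝ] ↥M)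
    (hAB : ∀ x y : ↥M, B (A x : L) (A y : L) = B (x : L) (y : L))
    (hAtriple : ∀ x y z : ↥M,
      (A ⟨⁅⁅(x : L), (y : L)⁆, (z : L)⁆, hHM _ (hMM _ x.2 _ y.2) _ z.2⟩ : L)
        = ⁅⁅(A x : L), (A y : L)⁆, (A z : L)⁆) :
    ∃! Φ : L ≃ₗ⁅ℝ⁆ L,
      (∀ x : ↥M, Φ (x : L) = A x) ∧ (∀ x : L, Φ (σ x) = σ (Φ x)) := by
  have S : IsSymmetricDecomposition σ H M := ⟨hH, hM, hcompl⟩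
  have hgen := S.lieSpan_anti_eq_top hHspan.le
  have heff := S.isEffective_of_separatingLeft hHspan.le hBnd.1 hBσ hBad
  exact lts_automorphism_extends_general S S hgen hgen heff heff A
    fun x y z => Subtype.ext (hAtriple x y z)
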